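/- Let Ω be an open subset of ℝⁿ and let f = (u₁, v₁) and g = (u₂, v₂) be H-continuous pairs on Ω. Then there exists a unique H-continuous pair (q_l, q_u) on Ω satisfying m(x) ≤ q_l(x) ≤ q_u(x) ≤ M(x) for all x ∈ Ω, where m(x) = min{u₁(x)u₂(x), u₁(x)v₂(x), v₁(x)u₂(x), v₁(x)v₂(x)} and M(x) = max of the same four numbers. -/

import Mathlib

open Set

/-- Points of `ℝⁿ`. -/
abbrev Pt (n : ℕ) := EuclideanSpace ℝ (Fin n)

/-- Lower Baire operator `I(D,Ω,f)(x) = sup_{δ>0} inf { f y : y ∈ B_δ(x) ∩ D }`,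
where `B_δ(x) = { y ∈ Ω : ‖y - x‖ < δ }`. -/
noncomputable def Ilow {n : ℕ} (D Om : Set (Pt n)) (f : Pt n → ℝ) (x : Pt n) : ℝ :=
  sSup {a : ℝ | ∃ δ : ℝ, 0 < δ ∧
    a = sInf (f '' {y | y ∈ Om ∧ ‖y - x‖ < δ ∧ y ∈ D})}

/-- Upper Baire operator `S(D,Ω,f)(x) = inf_{δ>0} sup { f y : y ∈ B_δ(x) ∩ D }`. -/
noncomputable def Shigh {n : ℕ} (D Om : Set (Pt n)) (f : Pt n → ℝ) (x : Pt n) : ℝ :=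
  sInf {a : ℝ | ∃ δ : ℝ, 0 < δ ∧
    a = sSup (f '' {y | y ∈ Om ∧ ‖y - x‖ < δ ∧ y ∈ D})}

/-- `f`, defined on `D ⊆ Ω`, is locally bounded relative to `Ω`. -/
def LocBddOn {n : ℕ} (Om D : Set (Pt n)) (f : Pt n → ℝ) : Prop :=
  ∀ x ∈ Om, ∃ δ : ℝ, 0 < δ ∧ ∃ M : ℝ,
    ∀ y, y ∈ Om → ‖y - x‖ < δ → y ∈ D → |f y| < M

/-- `(u, v)` encodes an interval-valued function `x ↦ [u x, v x]` on `Om`. -/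
def IntervalPair {n : ℕ} (Om : Set (Pt n)) (u v : Pt n → ℝ) : Prop :=
  LocBddOn Om Om u ∧ LocBddOn Om Om v ∧ ∀ x ∈ Om, u x ≤ v x

/-- The pair `(u, v)` is S-continuous on `Om`: `I(u) = u` and `S(v) = v`. -/
def SCont {n : ℕ} (Om : Set (Pt n)) (u v : Pt n → ℝ) : Prop :=
  ∀ x ∈ Om, Ilow Om Om u x = u x ∧ Shigh Om Om v x = v x

/-- The pair `(u, v)` is Hausdorff continuous on `Om`. -/
def HCont {n : ℕ} (Om : Set (Pt n)) (u v : Pt n → ℝ) : Prop :=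
  ∀ p q : Pt n → ℝ, LocBddOn Om Om p → LocBddOn Om Om q →
    (∀ x ∈ Om, u x ≤ p x ∧ p x ≤ q x ∧ q x ≤ v x) →
    ∀ x ∈ Om, Ilow Om Om p x = u x ∧ Shigh Om Om q x = v x

/-- `(u, v)` is an H-continuous interval pair on `Om`. -/
def HContPair {n : ℕ} (Om : Set (Pt n)) (u v : Pt n → ℝ) : Prop :=
  IntervalPair Om u v ∧ HCont Om u v

/-- Lower endpoint of the pointwise interval product. -/
noncomputable def imin {n : ℕ} (u₁ v₁ u₂ v₂ : Pt n → ℝ) (x : Pt n) : ℝ :=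
  min (min (u₁ x * u₂ x) (u₁ x * v₂ x)) (min (v₁ x * u₂ x) (v₁ x * v₂ x))

/-- Upper endpoint of the pointwise interval product. -/
noncomputable def imax {n : ℕ} (u₁ v₁ u₂ v₂ : Pt n → ℝ) (x : Pt n) : ℝ :=
  max (max (u₁ x * u₂ x) (u₁ x * v₂ x)) (max (v₁ x * u₂ x) (v₁ x * v₂ x))

/-- `(pl, pu)` is the H-continuous pair contained pointwise in the interval sum of
`(u₁, v₁)` and `(u₂, v₂)`, i.e. `(pl, pu) = (u₁,v₁) ⊕ (u₂,v₂)`. -/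
def IsOplus {n : ℕ} (Om : Set (Pt n)) (u₁ v₁ u₂ v₂ pl pu : Pt n → ℝ) : Prop :=
  HContPair Om pl pu ∧
    ∀ x ∈ Om, u₁ x + u₂ x ≤ pl x ∧ pl x ≤ pu x ∧ pu x ≤ v₁ x + v₂ x

/-- `(ql, qu)` is the H-continuous pair contained pointwise in the interval product of
`(u₁, v₁)` and `(u₂, v₂)`, i.e. `(ql, qu) = (u₁,v₁) ⊗ (u₂,v₂)`. -/
def IsOtimes {n : ℕ} (Om : Set (Pt n)) (u₁ v₁ u₂ v₂ ql qu : Pt n → ℝ) : Prop :=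
  HContPair Om ql qu ∧
    ∀ x ∈ Om, imin u₁ v₁ u₂ v₂ x ≤ ql x ∧ ql x ≤ qu x ∧ qu x ≤ imax u₁ v₁ u₂ v₂ x


def BBd {n : ℕ} (Om : Set (Pt n)) (f : Pt n → ℝ) : Prop :=
  ∀ R : ℝ, ∃ C : ℝ, ∀ y ∈ Om, ‖y‖ < R → |f y| ≤ C

theorem BBd.neg {n : ℕ} {Om : Set (Pt n)} {f : Pt n → ℝ} (h : BBd Om f) : BBd Om (-f) := by
  intro R
  obtain ⟨C, hC⟩ := h R
  exact ⟨C, fun y hy hR => by simpa using hC y hy hR⟩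

theorem BBd.between {n : ℕ} {Om : Set (Pt n)} {f g p : Pt n → ℝ} (hf : BBd Om f) (hg : BBd Om g)
    (h : ∀ x ∈ Om, f x ≤ p x ∧ p x ≤ g x) : BBd Om p := by
  intro R
  obtain ⟨C, hC⟩ := hf R
  obtain ⟨C', hC'⟩ := hg R
  refine ⟨max C C', fun y hy hR => ?_⟩
  have h1 := abs_le.1 (hC y hy hR)
  have h2 := abs_le.1 (hC' y hy hR)
  have h3 := h y hy
  rw [abs_le]
  constructor
  · linarith [le_max_left C C']
  · linarith [le_max_right C C']

theorem BBd.loc {n : ℕ} {Om : Set (Pt n)} {f : Pt n → ℝ} (h : BBd Om f) : LocBddOn Om Om f := by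
  intro x _
  obtain ⟨C, hC⟩ := h (‖x‖ + 1)
  refine ⟨1, one_pos, C + 1, fun y hy hd _ => ?_⟩
  have : ‖y‖ < ‖x‖ + 1 := by
    have := norm_sub_norm_le y x
    linarith
  linarith [hC y hy this]

theorem BBd.ball {n : ℕ} {Om : Set (Pt n)} {f : Pt n → ℝ} (h : BBd Om f) (x : Pt n) (δ : ℝ) :
    ∃ C : ℝ, ∀ y ∈ Om, ‖y - x‖ < δ → |f y| ≤ C := by
  obtain ⟨C, hC⟩ := h (‖x‖ + δ)
  refine ⟨C, fun y hy hd => hC y hy ?_⟩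
  have := norm_sub_norm_le y x
  linarith

theorem Shigh_eq {n : ℕ} (D Om : Set (Pt n)) (f : Pt n → ℝ) (x : Pt n) :
    Shigh D Om f x = - Ilow D Om (-f) x := by
  unfold Shigh Ilow
  rw [Real.sInf_def]
  congr 2
  ext a
  simp only [Set.mem_neg, Set.mem_ofPred_eq]
  refine exists_congr fun δ => and_congr_right fun _ => ?_
  rw [Real.sInf_def, neg_eq_iff_eq_neg]
  have : -((-f) '' {y | y ∈ Om ∧ ‖y - x‖ < δ ∧ y ∈ D}) = f '' {y | y ∈ Om ∧ ‖y - x‖ < δ ∧ y ∈ D} := by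
    ext b
    simp [neg_inj]
  rw [this]

theorem Ilow_eq {n : ℕ} (D Om : Set (Pt n)) (f : Pt n → ℝ) (x : Pt n) :
    Ilow D Om f x = - Shigh D Om (-f) x := by
  rw [Shigh_eq]; simp

section basics
variable {n : ℕ} {Om : Set (Pt n)} {f g : Pt n → ℝ} {x : Pt n}

theorem bdd_img (hf : BBd Om f) (δ : ℝ) :
    BddBelow (f '' {y | y ∈ Om ∧ ‖y - x‖ < δ ∧ y ∈ Om}) := by
  obtain ⟨C, hC⟩ := hf.ball x δ
  refine ⟨-C, ?_⟩
  rintro _ ⟨y, ⟨hy, hd, _⟩, rfl⟩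
  exact (abs_le.1 (hC y hy hd)).1

theorem Ilow_A (hf : BBd Om f) {c : ℝ} (h : c < Ilow Om Om f x) :
    ∃ δ > 0, ∀ y ∈ Om, ‖y - x‖ < δ → c < f y := by
  unfold Ilow at h
  obtain ⟨a, ⟨δ, hδ, rfl⟩, ha⟩ := exists_lt_of_lt_csSup (by exact ⟨_, 1, one_pos, rfl⟩) h
  exact ⟨δ, hδ, fun y hy hd => ha.trans_le (csInf_le (bdd_img hf δ) ⟨y, ⟨hy, hd, hy⟩, rfl⟩)⟩

theorem Ilow_B (hf : BBd Om f) (hx : x ∈ Om) {c : ℝ} {δ : ℝ} (hδ : 0 < δ)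
    (h : ∀ y ∈ Om, ‖y - x‖ < δ → c ≤ f y) : c ≤ Ilow Om Om f x := by
  unfold Ilow
  have h1 : c ≤ sInf (f '' {y | y ∈ Om ∧ ‖y - x‖ < δ ∧ y ∈ Om}) := by
    apply le_csInf
    · exact ⟨_, x, ⟨hx, by simpa using hδ, hx⟩, rfl⟩
    · rintro _ ⟨y, ⟨hy, hd, _⟩, rfl⟩
      exact h y hy hd
  refine h1.trans (le_csSup ⟨f x, ?_⟩ ⟨δ, hδ, rfl⟩)
  rintro _ ⟨e, he, rfl⟩
  exact csInf_le (bdd_img hf e) ⟨x, ⟨hx, by simpa using he, hx⟩, rfl⟩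

theorem Ilow_le (hf : BBd Om f) (hx : x ∈ Om) : Ilow Om Om f x ≤ f x := by
  by_contra! h
  obtain ⟨δ, hδ, h2⟩ := Ilow_A hf h
  exact lt_irrefl _ (h2 x hx (by simpa using hδ))

theorem Ilow_mono (hf : BBd Om f) (hg : BBd Om g) (h : ∀ y ∈ Om, f y ≤ g y) (hx : x ∈ Om) :
    Ilow Om Om f x ≤ Ilow Om Om g x := by
  apply le_of_forall_lt_imp_le_of_dense
  intro c hc
  obtain ⟨δ, hδ, h2⟩ := Ilow_A hf hc
  exact Ilow_B hg hx hδ fun y hy hd => (h2 y hy hd).le.trans (h y hy)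

theorem Ilow_BBd (hf : BBd Om f) : BBd Om (Ilow Om Om f) := by
  intro R
  obtain ⟨C, hC⟩ := hf (R + 1)
  refine ⟨C, fun y hy hR => abs_le.2 ⟨?_, ?_⟩⟩
  · refine Ilow_B hf hy one_pos fun z hz hd => (abs_le.1 (hC z hz ?_)).1
    have := norm_sub_norm_le z y
    linarith
  · exact (Ilow_le hf hy).trans (abs_le.1 (hC y hy (by linarith))).2

theorem Ilow_idem (hf : BBd Om f) (hx : x ∈ Om) :
    Ilow Om Om (Ilow Om Om f) x = Ilow Om Om f x := by
  apply le_antisymm (Ilow_le (Ilow_BBd hf) hx)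
  apply le_of_forall_lt_imp_le_of_dense
  intro c hc
  obtain ⟨δ, hδ, h2⟩ := Ilow_A hf hc
  refine Ilow_B (Ilow_BBd hf) hx hδ fun y hy hd => ?_
  refine Ilow_B (δ := δ - ‖y - x‖) hf hy (by linarith) fun z hz hz2 => (h2 z hz ?_).le
  have := norm_sub_le_norm_sub_add_norm_sub z y x
  linarith

theorem Shigh_A (hf : BBd Om f) {c : ℝ} (h : Shigh Om Om f x < c) :
    ∃ δ > 0, ∀ y ∈ Om, ‖y - x‖ < δ → f y < c := by
  rw [Shigh_eq] at h
  obtain ⟨δ, hδ, h2⟩ := Ilow_A (c := -c) hf.neg (by linarith)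
  refine ⟨δ, hδ, fun y hy hd => ?_⟩
  have := h2 y hy hd
  simp only [Pi.neg_apply] at this
  linarith

theorem Shigh_B (hf : BBd Om f) (hx : x ∈ Om) {c : ℝ} {δ : ℝ} (hδ : 0 < δ)
    (h : ∀ y ∈ Om, ‖y - x‖ < δ → f y ≤ c) : Shigh Om Om f x ≤ c := by
  rw [Shigh_eq]
  have := Ilow_B (c := -c) hf.neg hx hδ (fun y hy hd => by simpa using h y hy hd)
  linarith

theorem le_Shigh (hf : BBd Om f) (hx : x ∈ Om) : f x ≤ Shigh Om Om f x := by
  have := Ilow_le hf.neg hx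
  rw [Shigh_eq]
  simp only [Pi.neg_apply] at this
  linarith

theorem Shigh_mono (hf : BBd Om f) (hg : BBd Om g) (h : ∀ y ∈ Om, f y ≤ g y) (hx : x ∈ Om) :
    Shigh Om Om f x ≤ Shigh Om Om g x := by
  rw [Shigh_eq, Shigh_eq]
  have := Ilow_mono hg.neg hf.neg (fun y hy => by simpa using h y hy) hx
  linarith

theorem Shigh_fun (f : Pt n → ℝ) : Shigh Om Om f = - Ilow Om Om (-f) := by
  funext x; exact Shigh_eq _ _ _ _

theorem Shigh_BBd (hf : BBd Om f) : BBd Om (Shigh Om Om f) := by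
  rw [Shigh_fun]; exact (Ilow_BBd hf.neg).neg

theorem Shigh_idem (hf : BBd Om f) (hx : x ∈ Om) :
    Shigh Om Om (Shigh Om Om f) x = Shigh Om Om f x := by
  rw [Shigh_eq, Shigh_fun f, neg_neg, Ilow_idem hf.neg hx]; rfl

end basics

section pairs
variable {n : ℕ} {Om : Set (Pt n)} {u v : Pt n → ℝ}

theorem LocBddOn.neg' {f : Pt n → ℝ} (h : LocBddOn Om Om f) : LocBddOn Om Om (-f) := by
  simpa [LocBddOn] using h

theorem HContPair.neg (h : HContPair Om u v) : HContPair Om (-v) (-u) := by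
  obtain ⟨⟨h1, h2, h3⟩, h4⟩ := h
  refine ⟨⟨h2.neg', h1.neg', fun x hx => by simpa using h3 x hx⟩, ?_⟩
  intro p q hp hq hpq x hx
  have := h4 (-q) (-p) hq.neg' hp.neg' (fun y hy => by
    have := hpq y hy
    simp only [Pi.neg_apply] at *
    exact ⟨by linarith, by linarith, by linarith⟩) x hx
  rw [Ilow_eq, neg_neg, Shigh_eq _ _ (-p), neg_neg] at this
  simp only [Pi.neg_apply]
  exact ⟨by linarith [this.2], by linarith [this.1]⟩

theorem HContPair.lower (h : HContPair Om u v) (R : ℝ) :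
    ∃ C : ℝ, ∀ y ∈ Om, ‖y‖ < R → C ≤ u y := by
  by_contra! hc
  obtain ⟨x, hx, -, hx0⟩ := hc 0
  have h1 := (h.2 u v h.1.1 h.1.2.1 (fun y hy => ⟨le_rfl, h.1.2.2 y hy, le_rfl⟩) x hx).1
  have : 0 ≤ Ilow Om Om u x := by
    obtain ⟨y0, hy0, hyR, -⟩ := hc 0
    have hmem : (0:ℝ) ∈ {a : ℝ | ∃ δ : ℝ, 0 < δ ∧
        a = sInf (u '' {y | y ∈ Om ∧ ‖y - x‖ < δ ∧ y ∈ Om})} := by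
      refine ⟨R + ‖x‖, by linarith [norm_nonneg y0, norm_nonneg x], ?_⟩
      rw [Real.sInf_of_not_bddBelow]
      rintro ⟨C, hC⟩
      obtain ⟨y, hy, hR, hlt⟩ := hc C
      have := hC ⟨y, ⟨hy, by linarith [norm_sub_le y x], hy⟩, rfl⟩
      linarith
    unfold Ilow
    by_cases hb : BddAbove {a : ℝ | ∃ δ : ℝ, 0 < δ ∧
        a = sInf (u '' {y | y ∈ Om ∧ ‖y - x‖ < δ ∧ y ∈ Om})}
    · exact le_csSup hb hmem
    · rw [Real.sSup_of_not_bddAbove hb]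
  linarith

theorem HContPair.BBd (h : HContPair Om u v) : BBd Om u ∧ BBd Om v := by
  have key : ∀ R : ℝ, ∃ C : ℝ, ∀ y ∈ Om, ‖y‖ < R → |u y| ≤ C ∧ |v y| ≤ C := by
    intro R
    obtain ⟨C, hC⟩ := h.lower R
    obtain ⟨C', hC'⟩ := h.neg.lower R
    refine ⟨max (-C) (-C'), fun y hy hR => ?_⟩
    have h1 := hC y hy hR
    have h2 := hC' y hy hR
    have h3 := h.1.2.2 y hy
    simp only [Pi.neg_apply] at h2
    have h4 := le_max_left (-C) (-C')
    have h5 := le_max_right (-C) (-C')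
    exact ⟨abs_le.2 ⟨by linarith, by linarith⟩, abs_le.2 ⟨by linarith, by linarith⟩⟩
  constructor <;> intro R <;> obtain ⟨C, hC⟩ := key R
  · exact ⟨C, fun y hy hR => (hC y hy hR).1⟩
  · exact ⟨C, fun y hy hR => (hC y hy hR).2⟩

theorem HContPair.eqs (h : HContPair Om u v) {x : Pt n} (hx : x ∈ Om) :
    Ilow Om Om u x = u x ∧ Shigh Om Om v x = v x ∧ Ilow Om Om v x = u x ∧ Shigh Om Om u x = v x := by
  have h1 := h.2 u v h.1.1 h.1.2.1 (fun y hy => ⟨le_rfl, h.1.2.2 y hy, le_rfl⟩) x hx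
  have h2 := h.2 u u h.1.1 h.1.1 (fun y hy => ⟨le_rfl, le_rfl, h.1.2.2 y hy⟩) x hx
  have h3 := h.2 v v h.1.2.1 h.1.2.1 (fun y hy => ⟨h.1.2.2 y hy, le_rfl, le_rfl⟩) x hx
  exact ⟨h1.1, h1.2, h3.1, h2.2⟩

theorem mk_HContPair (hu : _root_.BBd Om u) (hv : _root_.BBd Om v) (huv : ∀ x ∈ Om, u x ≤ v x)
    (h1 : ∀ x ∈ Om, Ilow Om Om u x = u x) (h2 : ∀ x ∈ Om, Shigh Om Om v x = v x)
    (h3 : ∀ x ∈ Om, Ilow Om Om v x = u x) (h4 : ∀ x ∈ Om, Shigh Om Om u x = v x) :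
    HContPair Om u v := by
  refine ⟨⟨hu.loc, hv.loc, huv⟩, ?_⟩
  intro p q _ _ hpq x hx
  have hp : _root_.BBd Om p := hu.between hv fun y hy =>
    ⟨(hpq y hy).1, (hpq y hy).2.1.trans (hpq y hy).2.2⟩
  have hq : _root_.BBd Om q := hu.between hv fun y hy =>
    ⟨(hpq y hy).1.trans (hpq y hy).2.1, (hpq y hy).2.2⟩
  refine ⟨le_antisymm ?_ ?_, le_antisymm ?_ ?_⟩
  · rw [← h3 x hx]
    exact Ilow_mono hp hv (fun y hy => (hpq y hy).2.1.trans (hpq y hy).2.2) hx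
  · rw [← h1 x hx]
    exact Ilow_mono hu hp (fun y hy => (hpq y hy).1) hx
  · rw [← h2 x hx]
    exact Shigh_mono hq hv (fun y hy => (hpq y hy).2.2) hx
  · rw [← h4 x hx]
    exact Shigh_mono hu hq (fun y hy => (hpq y hy).1.trans (hpq y hy).2.1) hx

/-- near `x`, the pair stays within an `ε`-enlargement. -/
theorem HContPair.near (h : HContPair Om u v) {x : Pt n} (hx : x ∈ Om) {ε : ℝ} (hε : 0 < ε) :
    ∃ δ > 0, ∀ y ∈ Om, ‖y - x‖ < δ → u x - ε < u y ∧ v y < v x + ε := by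
  obtain ⟨e1, e2, -, -⟩ := h.eqs hx
  obtain ⟨δ, hδ, h1⟩ := Ilow_A (x := x) (c := u x - ε) h.BBd.1 (by linarith)
  obtain ⟨δ', hδ', h2⟩ := Shigh_A (x := x) (c := v x + ε) h.BBd.2 (by linarith)
  exact ⟨min δ δ', lt_min hδ hδ', fun y hy hd =>
    ⟨h1 y hy (hd.trans_le (min_le_left _ _)), h2 y hy (hd.trans_le (min_le_right _ _))⟩⟩

/-- points with small gap are dense, in an open way. -/
theorem HContPair.gap (h : HContPair Om u v) {x : Pt n} (hx : x ∈ Om) {r ε : ℝ} (hr : 0 < r)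
    (hε : 0 < ε) : ∃ z ∈ Om, ∃ s > 0, (∀ y ∈ Om, ‖y - z‖ < s → ‖y - x‖ < r ∧ v y - u y < ε) := by
  obtain ⟨C, hC⟩ := h.BBd.1.ball x r
  set A := u '' {y | y ∈ Om ∧ ‖y - x‖ < r} with hA
  have hne : A.Nonempty := ⟨_, x, ⟨hx, by simpa using hr⟩, rfl⟩
  have hb : BddAbove A := by
    refine ⟨C, ?_⟩
    rintro _ ⟨y, ⟨hy, hd⟩, rfl⟩
    exact (abs_le.1 (hC y hy hd)).2
  obtain ⟨_, ⟨z, ⟨hz, hzx⟩, rfl⟩, hlt⟩ := exists_lt_of_lt_csSup hne (show sSup A - ε / 3 < sSup A by linarith)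
  have tri : ∀ y : Pt n, ‖y - z‖ < r - ‖z - x‖ → ‖y - x‖ < r := fun y hy => by
    have := norm_sub_le_norm_sub_add_norm_sub y z x
    linarith
  have hv : v z ≤ sSup A := by
    rw [← (h.eqs hz).2.2.2]
    exact Shigh_B (δ := r - ‖z - x‖) h.BBd.1 hz (by linarith) fun y hy hd =>
      le_csSup hb ⟨y, ⟨hy, tri y hd⟩, rfl⟩
  obtain ⟨δ, hδ, hn⟩ := h.near hz (show 0 < ε / 3 by linarith)
  refine ⟨z, hz, min δ (r - ‖z - x‖), lt_min hδ (by linarith), fun y hy hd => ⟨?_, ?_⟩⟩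
  · exact tri y (hd.trans_le (min_le_right _ _))
  · have := hn y hy (hd.trans_le (min_le_left _ _))
    linarith

end pairs

theorem prod_le_mx {a b c d s t : ℝ} (h1 : a ≤ s) (h2 : s ≤ b) (h3 : c ≤ t) (h4 : t ≤ d) :
    s * t ≤ max (max (a * c) (a * d)) (max (b * c) (b * d)) := by
  have k : ∀ e : ℝ, e * t ≤ max (e * c) (e * d) := fun e => by
    rcases le_total 0 e with he | he
    · exact (mul_le_mul_of_nonneg_left h4 he).trans (le_max_right _ _)
    · exact (mul_le_mul_of_nonpos_left h3 he).trans (le_max_left _ _)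
  rcases le_total 0 t with ht | ht
  · exact (mul_le_mul_of_nonneg_right h2 ht).trans ((k b).trans (le_max_right _ _))
  · exact (mul_le_mul_of_nonpos_right h1 ht).trans ((k a).trans (le_max_left _ _))

theorem prod_near {a b c d s t K ε : ℝ} (hab : a ≤ b) (hcd : c ≤ d)
    (ha : |a| ≤ K) (hb : |b| ≤ K) (hc : |c| ≤ K) (hd : |d| ≤ K) (hε : 0 ≤ ε) (hε1 : ε ≤ 1)
    (h1 : a - ε ≤ s) (h2 : s ≤ b + ε) (h3 : c - ε ≤ t) (h4 : t ≤ d + ε) :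
    s * t ≤ max (max (a * c) (a * d)) (max (b * c) (b * d)) + ε * (2 * K + 1) := by
  have cl : ∀ a b s : ℝ, a ≤ b → |a| ≤ K → |b| ≤ K → a - ε ≤ s → s ≤ b + ε →
      ∃ s0, a ≤ s0 ∧ s0 ≤ b ∧ |s0| ≤ K ∧ |s - s0| ≤ ε := by
    intro a b s hab ha hb h1 h2
    rw [abs_le] at ha hb
    rcases le_total s a with h | h
    · exact ⟨a, le_rfl, hab, abs_le.2 ha, abs_le.2 ⟨by linarith, by linarith⟩⟩
    rcases le_total s b with h' | h'
    · exact ⟨s, h, h', abs_le.2 ⟨by linarith, by linarith⟩, by simpa using hε⟩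
    · exact ⟨b, hab, le_rfl, abs_le.2 hb, abs_le.2 ⟨by linarith, by linarith⟩⟩
  obtain ⟨s0, p1, p2, p3, p4⟩ := cl a b s hab ha hb h1 h2
  obtain ⟨t0, q1, q2, q3, q4⟩ := cl c d t hcd hc hd h3 h4
  have hm := prod_le_mx p1 p2 q1 q2
  have hK : 0 ≤ K := (abs_nonneg a).trans ha
  have ht : |t| ≤ K + 1 := by
    have := abs_add_le (t - t0) t0
    rw [sub_add_cancel] at this
    linarith
  have e1 : (s - s0) * t ≤ ε * (K + 1) := by
    refine (le_abs_self _).trans ?_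
    rw [abs_mul]
    exact mul_le_mul p4 ht (abs_nonneg _) hε
  have e2 : s0 * (t - t0) ≤ K * ε := by
    refine (le_abs_self _).trans ?_
    rw [abs_mul]
    exact mul_le_mul p3 q4 (abs_nonneg _) hK
  nlinarith

theorem imin_eq {n : ℕ} (u₁ v₁ u₂ v₂ : Pt n → ℝ) (x : Pt n) :
    imin u₁ v₁ u₂ v₂ x = - imax (-v₁) (-u₁) u₂ v₂ x := by
  simp only [imin, imax, Pi.neg_apply, neg_mul, max_neg_neg, neg_neg]
  exact min_comm _ _

section prod
variable {n : ℕ} {Om : Set (Pt n)} {u₁ v₁ u₂ v₂ : Pt n → ℝ}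

theorem imax_BBd (h₁ : HContPair Om u₁ v₁) (h₂ : HContPair Om u₂ v₂) :
    BBd Om (imax u₁ v₁ u₂ v₂) := by
  intro R
  obtain ⟨C1, k1⟩ := h₁.BBd.1 R
  obtain ⟨C2, k2⟩ := h₁.BBd.2 R
  obtain ⟨C3, k3⟩ := h₂.BBd.1 R
  obtain ⟨C4, k4⟩ := h₂.BBd.2 R
  set C := max (max C1 C2) (max C3 C4) with hC
  have b1 : C1 ≤ C := (le_max_left _ _).trans (le_max_left _ _)
  have b2 : C2 ≤ C := (le_max_right _ _).trans (le_max_left _ _)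
  have b3 : C3 ≤ C := (le_max_left _ _).trans (le_max_right _ _)
  have b4 : C4 ≤ C := (le_max_right _ _).trans (le_max_right _ _)
  refine ⟨C * C, fun y hy hR => ?_⟩
  have key : ∀ s t : ℝ, |s| ≤ C → |t| ≤ C → |s * t| ≤ C * C := fun s t hs ht => by
    rw [abs_mul]
    exact mul_le_mul hs ht (abs_nonneg _) ((abs_nonneg _).trans hs)
  have mx : ∀ s t : ℝ, |s| ≤ C * C → |t| ≤ C * C → |max s t| ≤ C * C := fun s t hs ht => by
    rcases max_choice s t with h | h <;> rw [h] <;> assumption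
  have c1 := (k1 y hy hR).trans b1
  have c2 := (k2 y hy hR).trans b2
  have c3 := (k3 y hy hR).trans b3
  have c4 := (k4 y hy hR).trans b4
  exact mx _ _ (mx _ _ (key _ _ c1 c3) (key _ _ c1 c4)) (mx _ _ (key _ _ c2 c3) (key _ _ c2 c4))

theorem imax_usc (h₁ : HContPair Om u₁ v₁) (h₂ : HContPair Om u₂ v₂) {x : Pt n} (hx : x ∈ Om) :
    Shigh Om Om (imax u₁ v₁ u₂ v₂) x ≤ imax u₁ v₁ u₂ v₂ x := by
  set K := max (max |u₁ x| |v₁ x|) (max |u₂ x| |v₂ x|) with hK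
  have b1 : |u₁ x| ≤ K := (le_max_left _ _).trans (le_max_left _ _)
  have b2 : |v₁ x| ≤ K := (le_max_right _ _).trans (le_max_left _ _)
  have b3 : |u₂ x| ≤ K := (le_max_left _ _).trans (le_max_right _ _)
  have b4 : |v₂ x| ≤ K := (le_max_right _ _).trans (le_max_right _ _)
  have hK0 : 0 ≤ K := (abs_nonneg _).trans b1
  apply le_of_forall_pos_le_add
  intro η hη
  set ε := min 1 (η / (2 * K + 1)) with hεd
  have hε : 0 < ε := lt_min one_pos (by positivity)
  have hε1 : ε ≤ 1 := min_le_left _ _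
  have hεη : ε * (2 * K + 1) ≤ η := by
    rw [← le_div_iff₀ (by positivity)]; exact min_le_right _ _
  obtain ⟨δ, hδ, k1⟩ := h₁.near hx hε
  obtain ⟨δ', hδ', k2⟩ := h₂.near hx hε
  refine Shigh_B (imax_BBd h₁ h₂) hx (lt_min hδ hδ') fun y hy hd => ?_
  obtain ⟨p1, p2⟩ := k1 y hy (hd.trans_le (min_le_left _ _))
  obtain ⟨q1, q2⟩ := k2 y hy (hd.trans_le (min_le_right _ _))
  have p3 := h₁.1.2.2 y hy
  have q3 := h₂.1.2.2 y hy
  have key : ∀ s t : ℝ, u₁ y ≤ s → s ≤ v₁ y → u₂ y ≤ t → t ≤ v₂ y →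
      s * t ≤ imax u₁ v₁ u₂ v₂ x + η := fun s t a b c d =>
    (prod_near (h₁.1.2.2 x hx) (h₂.1.2.2 x hx) b1 b2 b3 b4 hε.le hε1 (by linarith) (by linarith)
      (by linarith) (by linarith)).trans (by unfold imax; linarith)
  exact max_le (max_le (key _ _ le_rfl p3 le_rfl q3) (key _ _ le_rfl p3 q3 le_rfl))
    (max_le (key _ _ p3 le_rfl le_rfl q3) (key _ _ p3 le_rfl q3 le_rfl))

theorem imin_fun : imin u₁ v₁ u₂ v₂ = - imax (-v₁) (-u₁) u₂ v₂ := by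
  funext x; exact imin_eq _ _ _ _ x

theorem imin_BBd (h₁ : HContPair Om u₁ v₁) (h₂ : HContPair Om u₂ v₂) :
    BBd Om (imin u₁ v₁ u₂ v₂) := by
  rw [imin_fun]; exact (imax_BBd h₁.neg h₂).neg

theorem imin_lsc (h₁ : HContPair Om u₁ v₁) (h₂ : HContPair Om u₂ v₂) {x : Pt n} (hx : x ∈ Om) :
    imin u₁ v₁ u₂ v₂ x ≤ Ilow Om Om (imin u₁ v₁ u₂ v₂) x := by
  rw [Ilow_eq, imin_fun, neg_neg]
  have := imax_usc h₁.neg h₂ hx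
  simp only [Pi.neg_apply]
  linarith

theorem imin_le_imax (x : Pt n) : imin u₁ v₁ u₂ v₂ x ≤ imax u₁ v₁ u₂ v₂ x :=
  ((min_le_left _ _).trans (min_le_left _ _)).trans ((le_max_left _ _).trans (le_max_left _ _))

theorem gap_prod (hOm : IsOpen Om) (h₁ : HContPair Om u₁ v₁) (h₂ : HContPair Om u₂ v₂) {x : Pt n}
    (hx : x ∈ Om) {r η : ℝ} (hr : 0 < r) (hη : 0 < η) :
    ∃ z ∈ Om, ‖z - x‖ < r ∧ imax u₁ v₁ u₂ v₂ z ≤ imin u₁ v₁ u₂ v₂ z + η := by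
  obtain ⟨C1, k1⟩ := h₁.BBd.1.ball x r
  obtain ⟨C2, k2⟩ := h₁.BBd.2.ball x r
  obtain ⟨C3, k3⟩ := h₂.BBd.1.ball x r
  obtain ⟨C4, k4⟩ := h₂.BBd.2.ball x r
  set C := max (max C1 C2) (max C3 C4) with hC
  have b1 : C1 ≤ C := (le_max_left _ _).trans (le_max_left _ _)
  have b2 : C2 ≤ C := (le_max_right _ _).trans (le_max_left _ _)
  have b3 : C3 ≤ C := (le_max_left _ _).trans (le_max_right _ _)
  have b4 : C4 ≤ C := (le_max_right _ _).trans (le_max_right _ _)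
  have hC0 : 0 ≤ C := (abs_nonneg _).trans ((k1 x hx (by simpa using hr)).trans b1)
  set ε := η / (2 * C + 1) with hεd
  have hε : 0 < ε := by positivity
  have hεη : ε * (2 * C + 1) = η := by rw [hεd]; field_simp
  obtain ⟨z1, hz1, s1, hs1, g1⟩ := h₁.gap hx hr hε
  obtain ⟨z, hz, s2, hs2, g2⟩ := h₂.gap hz1 hs1 hε
  obtain ⟨f1, f2⟩ := g2 z hz (by simpa using hs2)
  obtain ⟨f3, f4⟩ := g1 z hz f1
  refine ⟨z, hz, f3, ?_⟩
  have c1 := (k1 z hz f3).trans b1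
  have c2 := (k2 z hz f3).trans b2
  have c3 := (k3 z hz f3).trans b3
  have c4 := (k4 z hz f3).trans b4
  have p3 := h₁.1.2.2 z hz
  have q3 := h₂.1.2.2 z hz
  have key : ∀ s t s' t' : ℝ, |s| ≤ C → |t'| ≤ C → |s - s'| ≤ ε → |t - t'| ≤ ε →
      s * t ≤ s' * t' + η := by
    intro s t s' t' h1 h2 h3 h4
    have e1 : (s - s') * t' ≤ ε * C := by
      refine (le_abs_self _).trans ?_
      rw [abs_mul]
      exact mul_le_mul h3 h2 (abs_nonneg _) hε.le
    have e2 : s * (t - t') ≤ C * ε := by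
      refine (le_abs_self _).trans ?_
      rw [abs_mul]
      exact mul_le_mul h1 h4 (abs_nonneg _) hC0
    nlinarith
  have a1 : |u₁ z - u₁ z| ≤ ε := by simpa using hε.le
  have a2 : |v₁ z - v₁ z| ≤ ε := by simpa using hε.le
  have a3 : |u₁ z - v₁ z| ≤ ε := abs_le.2 ⟨by linarith, by linarith⟩
  have a4 : |v₁ z - u₁ z| ≤ ε := abs_le.2 ⟨by linarith, by linarith⟩
  have a5 : |u₂ z - u₂ z| ≤ ε := by simpa using hε.le
  have a6 : |v₂ z - v₂ z| ≤ ε := by simpa using hε.le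
  have a7 : |u₂ z - v₂ z| ≤ ε := abs_le.2 ⟨by linarith, by linarith⟩
  have a8 : |v₂ z - u₂ z| ≤ ε := abs_le.2 ⟨by linarith, by linarith⟩
  rw [← sub_le_iff_le_add]
  unfold imin imax
  refine le_min (le_min ?_ ?_) (le_min ?_ ?_) <;> rw [sub_le_iff_le_add] <;>
    refine max_le (max_le ?_ ?_) (max_le ?_ ?_) <;> apply key <;> assumption

end prod

theorem stmt8 {n : ℕ} (Om : Set (Pt n)) (hOm : IsOpen Om)
    (u₁ v₁ u₂ v₂ : Pt n → ℝ)
    (h₁ : HContPair Om u₁ v₁) (h₂ : HContPair Om u₂ v₂) :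
    ∃ ql qu : Pt n → ℝ,
      (HContPair Om ql qu ∧
        ∀ x ∈ Om, imin u₁ v₁ u₂ v₂ x ≤ ql x ∧ ql x ≤ qu x ∧
          qu x ≤ imax u₁ v₁ u₂ v₂ x) ∧
      ∀ rl ru : Pt n → ℝ, HContPair Om rl ru →
        (∀ x ∈ Om, imin u₁ v₁ u₂ v₂ x ≤ rl x ∧ rl x ≤ ru x ∧
          ru x ≤ imax u₁ v₁ u₂ v₂ x) →
        ∀ x ∈ Om, rl x = ql x ∧ ru x = qu x := by
  have hM := imax_BBd h₁ h₂
  have hm := imin_BBd h₁ h₂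
  set M := imax u₁ v₁ u₂ v₂ with hMd
  set m := imin u₁ v₁ u₂ v₂ with hmd
  set a := Ilow Om Om M with had
  have ha : BBd Om a := Ilow_BBd hM
  set b := Shigh Om Om a with hbd
  have hb : BBd Om b := Shigh_BBd ha
  have aM : ∀ x ∈ Om, a x ≤ M x := fun x hx => Ilow_le hM hx
  have ab : ∀ x ∈ Om, a x ≤ b x := fun x hx => le_Shigh ha hx
  have bM : ∀ x ∈ Om, b x ≤ M x := fun x hx =>
    (Shigh_mono ha hM aM hx).trans (imax_usc h₁ h₂ hx)
  have ma : ∀ x ∈ Om, m x ≤ a x := fun x hx =>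
    (imin_lsc h₁ h₂ hx).trans (Ilow_mono hm hM (fun y _ => imin_le_imax y) hx)
  have Ia : ∀ x ∈ Om, Ilow Om Om a x = a x := fun x hx => Ilow_idem hM hx
  have Ib : ∀ x ∈ Om, Ilow Om Om b x = a x := fun x hx =>
    le_antisymm (Ilow_mono hb hM bM hx) ((Ia x hx).symm.le.trans (Ilow_mono ha hb ab hx))
  have hH : HContPair Om a b := mk_HContPair ha hb ab Ia (fun x hx => Shigh_idem ha hx) Ib
    (fun x hx => rfl)
  refine ⟨a, b, ⟨hH, fun x hx => ⟨ma x hx, ab x hx, bM x hx⟩⟩, ?_⟩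
  intro rl ru hr hrM
  have ra : ∀ x ∈ Om, rl x ≤ a x := fun x hx => by
    rw [← (hr.eqs hx).2.2.1]
    exact Ilow_mono hr.BBd.2 hM (fun y hy => (hrM y hy).2.2) hx
  have rb : ∀ x ∈ Om, ru x ≤ b x := fun x hx => by
    rw [← (hr.eqs hx).2.2.2]
    exact Shigh_mono hr.BBd.1 ha ra hx
  have br : ∀ x ∈ Om, b x ≤ ru x := by
    intro x hx
    rw [← (hr.eqs hx).2.1]
    refine Shigh_mono ha hr.BBd.2 ?_ hx
    intro y hy
    by_contra! hlt
    obtain ⟨c, hc1, hc2⟩ := exists_between hlt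
    obtain ⟨δ, hδ, k⟩ := Ilow_A hM hc2
    obtain ⟨c', hc3, hc4⟩ := exists_between hc1
    rw [← (hr.eqs hy).2.1] at hc3
    obtain ⟨δ', hδ', k'⟩ := Shigh_A hr.BBd.2 hc3
    obtain ⟨z, hz, hzy, hg⟩ := gap_prod hOm h₁ h₂ hy (lt_min hδ hδ') (show 0 < c - c' by linarith)
    have t1 := k z hz (hzy.trans_le (min_le_left _ _))
    have t2 := k' z hz (hzy.trans_le (min_le_right _ _))
    have t3 := (hrM z hz)
    linarith [t3.1, t3.2.1]
  have e : ∀ x ∈ Om, ru x = b x := fun x hx => le_antisymm (rb x hx) (br x hx)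
  intro x hx
  refine ⟨le_antisymm (ra x hx) ?_, e x hx⟩
  rw [← Ib x hx, ← (hr.eqs hx).2.2.1]
  exact Ilow_mono hb hr.BBd.2 br hx
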